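/- Let n be a positive integer, β : ℝ → ℝ, and let F be a set of functions f : {-1,1}^n → [-1,1] such that: (1) |E_ε[f] − E_0[f]| ≤ β(ε) for every f ∈ F and every ε ∈ [-1,1]; and (2) for every f ∈ F there exists g ∈ F such that ĝ({i}) = |f̂({i})| for every 1 ≤ i ≤ n. Then for every f ∈ F and every nonzero ε with |ε| ≤ 1/√n, we have ∑_{i=1}^n |f̂({i})| ≤ |β(ε)/ε| + |ε| · n. -/

import Mathlib

open Finset

/-- The real sign `±1` associated to a Boolean, encoding `{-1,1}`. -/
noncomputable def sgn (b : Bool) : ℝ := if b then 1 else -1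

/-- Fourier coefficient `f̂(S) = 2^{-n} ∑_x f(x) ∏_{i∈S} x_i` of `f : {-1,1}^n → ℝ`. -/
noncomputable def walshCoeff {n : ℕ} (f : (Fin n → Bool) → ℝ) (S : Finset (Fin n)) : ℝ :=
  (2 ^ n : ℝ)⁻¹ * ∑ x : Fin n → Bool, f x * ∏ i ∈ S, sgn (x i)

/-- Expectation of `f` under `ε`-biased coins:
`E_ε[f] = ∑_x f(x) ∏_i (1 + ε·x_i)/2`. -/
noncomputable def biasedExp {n : ℕ} (f : (Fin n → Bool) → ℝ) (ε : ℝ) : ℝ :=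
  ∑ x : Fin n → Bool, f x * ∏ i : Fin n, (1 + ε * sgn (x i)) / 2

/-!
Expanding `E_ε[f] = ∑ S, ε ^ |S| f̂(S)`, the difference `E_ε[f] - E_0[f]` is `ε ∑ i, f̂({i})` plus
the contribution of the levels `|S| ≥ 2`. By Cauchy–Schwarz and Parseval that contribution is at
most `√((1 + ε²)^n - 1 - nε²) ≤ nε²` when `nε² ≤ 1`. When `nε² ≥ 1`, Cauchy–Schwarz and Parseval on
level one alone give `|∑ i, f̂({i})| ≤ √n ≤ |ε| n`. Passing from `f` to a function of the class with
level-one coefficients `|f̂({i})|` turns these into bounds on `∑ i, |f̂({i})|`.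
-/

open scoped BigOperators

theorem sum_finset_eq_add_sum_singleton_add_sum_two_le_card {ι M : Type*} [Fintype ι]
    [AddCommMonoid M] (a : Finset ι → M) :
    ∑ S, a S = a ∅ + ∑ i, a {i} + ∑ S with 2 ≤ #S, a S := by
  classical
  have low_levels :
      ({S | ¬ 2 ≤ #S} : Finset (Finset ι)) = insert ∅ (univ.map ⟨_, singleton_injective⟩) := by
    ext S
    have : ¬ 2 ≤ #S ↔ #S = 0 ∨ #S = 1 := by lia
    rw [mem_filter, this]
    simp [card_eq_one, eq_comm]
  rw [← sum_filter_not_add_sum_filter univ (2 ≤ #·), low_levels, sum_insert (by simp), sum_map]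
  rfl

theorem sum_two_le_card_pow_card {ι R : Type*} [Fintype ι] [CommRing R] (t : R) :
    ∑ S : Finset ι with 2 ≤ #S, t ^ #S =
      (1 + t) ^ Fintype.card ι - 1 - Fintype.card ι * t := by
  have binomial : ∑ S : Finset ι, t ^ #S = (1 + t) ^ Fintype.card ι := by
    simpa [add_comm] using Fintype.sum_pow_mul_eq_add_pow ι t 1
  rw [← binomial, sum_finset_eq_add_sum_singleton_add_sum_two_le_card]
  simp only [card_empty, pow_zero, card_singleton, pow_one, sum_const, card_univ, nsmul_eq_mul]
  ring

theorem one_add_pow_le_one_add_mul_add_sq {n : ℕ} {t : ℝ} (ht : 0 ≤ t) (hnt : n * t ≤ 1) :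
    (1 + t) ^ n ≤ 1 + n * t + (n * t) ^ 2 := by
  have hnt₀ : 0 ≤ n * t := by positivity
  have le_exp : (1 + t) ^ n ≤ Real.exp (n * t) := by
    rw [Real.exp_nat_mul, add_comm]
    gcongr
    exact Real.add_one_le_exp t
  have exp_le := Real.abs_exp_sub_one_sub_id_le (abs_le.2 ⟨by linarith, hnt⟩)
  linarith [(abs_le.1 exp_le).2]

theorem one_add_sgn_mul_sgn (a b : Bool) : 1 + sgn a * sgn b = if a = b then 2 else 0 := by
  cases a <;> cases b <;> norm_num [sgn]

section Fourier

variable {n : ℕ} (f : (Fin n → Bool) → ℝ)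

theorem sum_prod_sgn_mul_prod_sgn (x y : Fin n → Bool) :
    ∑ S : Finset (Fin n), (∏ i ∈ S, sgn (x i)) * ∏ i ∈ S, sgn (y i) =
      if x = y then 2 ^ n else 0 := by
  calc ∑ S : Finset (Fin n), (∏ i ∈ S, sgn (x i)) * ∏ i ∈ S, sgn (y i)
      = ∏ i, (1 + sgn (x i) * sgn (y i)) := by
        simp only [prod_one_add, powerset_univ, prod_mul_distrib]
    _ = if x = y then 2 ^ n else 0 := by
        simp only [one_add_sgn_mul_sgn, prod_ite_zero, mem_univ, forall_const, funext_iff,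
          prod_const, card_univ, Fintype.card_fin]

theorem sum_sq_walshCoeff : ∑ S, walshCoeff f S ^ 2 = 𝔼 x, f x ^ 2 := by
  have expand (S : Finset (Fin n)) : walshCoeff f S ^ 2 = (2 ^ n : ℝ)⁻¹ ^ 2 *
      ∑ x, ∑ y, f x * f y * ((∏ i ∈ S, sgn (x i)) * ∏ i ∈ S, sgn (y i)) := by
    rw [walshCoeff, mul_pow, sq (∑ x, _), sum_mul_sum]
    simp only [mul_mul_mul_comm]
  calc ∑ S, walshCoeff f S ^ 2
      = (2 ^ n : ℝ)⁻¹ ^ 2 * ∑ x, ∑ y, f x * f y *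
          ∑ S : Finset (Fin n), (∏ i ∈ S, sgn (x i)) * ∏ i ∈ S, sgn (y i) := by
        simp only [expand, mul_sum]
        rw [sum_comm]
        exact sum_congr rfl fun x _ => sum_comm
    _ = (2 ^ n : ℝ)⁻¹ ^ 2 * ∑ x, f x * f x * 2 ^ n := by
        simp only [sum_prod_sgn_mul_prod_sgn, mul_ite, mul_zero, sum_ite_eq, mem_univ, if_true]
    _ = 𝔼 x, f x ^ 2 := by
        rw [Fintype.expect_eq_sum_div_card, ← sum_mul]
        simp only [← sq, Fintype.card_pi, Fintype.card_bool, prod_const, card_univ,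
          Fintype.card_fin, Nat.cast_pow, Nat.cast_ofNat]
        field_simp

theorem biasedExp_eq_sum_walshCoeff (ε : ℝ) :
    biasedExp f ε = ∑ S, ε ^ #S * walshCoeff f S := by
  have weight (x : Fin n → Bool) : ∏ i, (1 + ε * sgn (x i)) / 2 =
      (2 ^ n : ℝ)⁻¹ * ∑ S : Finset (Fin n), ε ^ #S * ∏ i ∈ S, sgn (x i) := by
    simp [prod_one_add, prod_mul_distrib, div_eq_inv_mul]
  simp only [biasedExp, walshCoeff, weight, mul_sum]
  rw [sum_comm]
  exact sum_congr rfl fun S _ => sum_congr rfl fun x _ => by ring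

theorem biasedExp_zero : biasedExp f 0 = walshCoeff f ∅ := by
  simp [biasedExp, walshCoeff, mul_sum, mul_comm]

theorem biasedExp_sub_level_zero_one_eq_sum_two_le_card (ε : ℝ) :
    biasedExp f ε - biasedExp f 0 - ε * ∑ i, walshCoeff f {i} =
      ∑ S with 2 ≤ #S, ε ^ #S * walshCoeff f S := by
  rw [biasedExp_zero, biasedExp_eq_sum_walshCoeff,
    sum_finset_eq_add_sum_singleton_add_sum_two_le_card]
  simp only [card_empty, pow_zero, one_mul, card_singleton, pow_one, ← mul_sum]
  ring

theorem sq_biasedExp_sub_level_zero_one_le (ε : ℝ) :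
    (biasedExp f ε - biasedExp f 0 - ε * ∑ i, walshCoeff f {i}) ^ 2 ≤
      ((1 + ε ^ 2) ^ n - 1 - n * ε ^ 2) * 𝔼 x, f x ^ 2 := by
  have weights : ∑ S : Finset (Fin n) with 2 ≤ #S, (ε ^ #S) ^ 2 =
      (1 + ε ^ 2) ^ n - 1 - n * ε ^ 2 := by
    simp only [pow_right_comm ε _ 2, sum_two_le_card_pow_card, Fintype.card_fin]
  rw [biasedExp_sub_level_zero_one_eq_sum_two_le_card, ← weights, ← sum_sq_walshCoeff]
  refine (sum_mul_sq_le_sq_mul_sq _ _ _).trans ?_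
  gcongr
  exact filter_subset _ _

theorem sq_sum_walshCoeff_singleton_le :
    (∑ i, walshCoeff f {i}) ^ 2 ≤ n * 𝔼 x, f x ^ 2 := by
  have level_one_le : ∑ i, walshCoeff f {i} ^ 2 ≤ 𝔼 x, f x ^ 2 := by
    rw [← sum_sq_walshCoeff, sum_finset_eq_add_sum_singleton_add_sum_two_le_card]
    have high_levels_nonneg : 0 ≤ ∑ S with 2 ≤ #S, walshCoeff f S ^ 2 := by positivity
    linarith [sq_nonneg (walshCoeff f ∅)]
  calc (∑ i, walshCoeff f {i}) ^ 2
      ≤ n * ∑ i, walshCoeff f {i} ^ 2 := by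
        simpa using sq_sum_le_card_mul_sum_sq (s := univ) (f := fun i => walshCoeff f {i})
    _ ≤ n * 𝔼 x, f x ^ 2 := by gcongr

variable {f} {ε : ℝ}

theorem abs_biasedExp_sub_level_zero_one_le (hf : 𝔼 x, f x ^ 2 ≤ 1) (hε : n * ε ^ 2 ≤ 1) :
    |biasedExp f ε - biasedExp f 0 - ε * ∑ i, walshCoeff f {i}| ≤ n * ε ^ 2 := by
  refine abs_le_of_sq_le_sq ?_ (by positivity)
  have bernoulli : 1 + n * ε ^ 2 ≤ (1 + ε ^ 2) ^ n :=
    one_add_mul_le_pow (by linarith [sq_nonneg ε]) n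
  calc (biasedExp f ε - biasedExp f 0 - ε * ∑ i, walshCoeff f {i}) ^ 2
      ≤ ((1 + ε ^ 2) ^ n - 1 - n * ε ^ 2) * 𝔼 x, f x ^ 2 :=
        sq_biasedExp_sub_level_zero_one_le f ε
    _ ≤ (1 + ε ^ 2) ^ n - 1 - n * ε ^ 2 := mul_le_of_le_one_right (by linarith) hf
    _ ≤ (n * ε ^ 2) ^ 2 := by linarith [one_add_pow_le_one_add_mul_add_sq (sq_nonneg ε) hε]

theorem abs_sum_walshCoeff_singleton_le_of_mul_sq_le_one (hf : 𝔼 x, f x ^ 2 ≤ 1) (hε₀ : ε ≠ 0)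
    (hε : n * ε ^ 2 ≤ 1) :
    |∑ i, walshCoeff f {i}| ≤ |biasedExp f ε - biasedExp f 0| / |ε| + |ε| * n := by
  have hpos : 0 < |ε| := abs_pos.2 hε₀
  rw [div_add' _ _ _ hpos.ne', le_div_iff₀ hpos]
  calc |∑ i, walshCoeff f {i}| * |ε|
      = |ε * ∑ i, walshCoeff f {i}| := by rw [abs_mul, mul_comm]
    _ ≤ |biasedExp f ε - biasedExp f 0| +
          |biasedExp f ε - biasedExp f 0 - ε * ∑ i, walshCoeff f {i}| := by
        simpa only [sub_sub_cancel] using abs_sub (biasedExp f ε - biasedExp f 0)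
          (biasedExp f ε - biasedExp f 0 - ε * ∑ i, walshCoeff f {i})
    _ ≤ |biasedExp f ε - biasedExp f 0| + n * ε ^ 2 := by
        gcongr
        exact abs_biasedExp_sub_level_zero_one_le hf hε
    _ = |biasedExp f ε - biasedExp f 0| + |ε| * n * |ε| := by
        rw [← sq_abs ε]
        ring

theorem abs_sum_walshCoeff_singleton_le_of_le_sq (hf : 𝔼 x, f x ^ 2 ≤ 1)
    (hε : n ≤ (ε * n) ^ 2) : |∑ i, walshCoeff f {i}| ≤ |ε| * n := by
  rw [← Nat.abs_cast n, ← abs_mul]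
  refine sq_le_sq.1 ?_
  calc (∑ i, walshCoeff f {i}) ^ 2
      ≤ n * 𝔼 x, f x ^ 2 := sq_sum_walshCoeff_singleton_le f
    _ ≤ n := mul_le_of_le_one_right n.cast_nonneg hf
    _ ≤ (ε * n) ^ 2 := hε

end Fourier

theorem level_one_of_coin_class_general {n : ℕ} {β : ℝ → ℝ} {F : Set ((Fin n → Bool) → ℝ)}
    (hsq : ∀ f ∈ F, 𝔼 x, f x ^ 2 ≤ 1)
    (hcoin : ∀ f ∈ F, ∀ ε ∈ Set.Icc (-1 : ℝ) 1, |biasedExp f ε - biasedExp f 0| ≤ β ε)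
    (habs : ∀ f ∈ F, ∃ g ∈ F, ∀ i : Fin n, walshCoeff g {i} = |walshCoeff f {i}|)
    {f : (Fin n → Bool) → ℝ} (hf : f ∈ F) {ε : ℝ} (hε : ε ≠ 0) :
    ∑ i : Fin n, |walshCoeff f {i}| ≤ |β ε / ε| + |ε| * n := by
  obtain ⟨g, hg, hgf⟩ := habs f hf
  simp only [← hgf]
  refine (le_abs_self _).trans ?_
  rcases le_or_gt (n : ℝ) ((ε * n) ^ 2) with large | small
  · exact (abs_sum_walshCoeff_singleton_le_of_le_sq (hsq g hg) large).trans
      (le_add_of_nonneg_left (abs_nonneg _))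
  · have hn : (0 : ℝ) < n := (sq_nonneg _).trans_lt small
    have one_le_n : (1 : ℝ) ≤ n := by exact_mod_cast hn
    have mul_sq_le_one : n * ε ^ 2 ≤ 1 := by nlinarith
    have sq_le_one : ε ^ 2 ≤ 1 := (le_mul_of_one_le_left (sq_nonneg ε) one_le_n).trans mul_sq_le_one
    have coin : |biasedExp g ε - biasedExp g 0| ≤ |β ε| :=
      (hcoin g hg ε (abs_le.1 ((sq_le_one_iff_abs_le_one ε).1 sq_le_one))).trans (le_abs_self _)
    rw [abs_div]
    refine (abs_sum_walshCoeff_singleton_le_of_mul_sq_le_one (hsq g hg) hε mul_sq_le_one).trans ?_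
    gcongr

/-- if every f ∈ F (all [-1,1]-valued) satisfies the coin theorem
|E_ε[f] − E_0[f]| ≤ β(ε) for ε ∈ [-1,1], and for every f ∈ F there is g ∈ F with
ĝ({i}) = |f̂({i})| for all i, then for every f ∈ F and nonzero |ε| ≤ 1/√n,
∑_i |f̂({i})| ≤ |β(ε)/ε| + |ε|·n. -/
theorem level_one_of_coin_class (n : ℕ) (hn : 0 < n) (β : ℝ → ℝ)
    (F : Set ((Fin n → Bool) → ℝ))
    (hbdd : ∀ f ∈ F, ∀ x, f x ∈ Set.Icc (-1 : ℝ) 1)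
    (hcoin : ∀ f ∈ F, ∀ ε ∈ Set.Icc (-1 : ℝ) 1,
      |biasedExp f ε - biasedExp f 0| ≤ β ε)
    (habs : ∀ f ∈ F, ∃ g ∈ F, ∀ i : Fin n,
      walshCoeff g {i} = |walshCoeff f {i}|) :
    ∀ f ∈ F, ∀ ε : ℝ, ε ≠ 0 → |ε| ≤ 1 / Real.sqrt n →
      ∑ i : Fin n, |walshCoeff f {i}| ≤ |β ε / ε| + |ε| * n := by
  have hsq : ∀ f ∈ F, 𝔼 x, f x ^ 2 ≤ 1 := fun f hf =>
    expect_le univ_nonempty fun x _ => (sq_le_one_iff_abs_le_one _).2 (abs_le.2 (hbdd f hf x))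
  exact fun f hf ε hε _ => level_one_of_coin_class_general hsq hcoin habs hf hε
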